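/- arXiv:1703.10412 — 2 statements merged into one kernel-verified Lean document; each statement's English description precedes it below -/
import Mathlib

section
/- Let X be a dynamical set over Λ of PH type, T = ⟨-,-,-⟩ a ternary operation on Λ satisfying (E1) and (E2), and σ_T the associated dynamical Yang–Baxter map on X. Then σ_T is idempotent, i.e. σ_T(λ) ∘ σ_T(λ) = σ_T(λ) for all λ ∈ Λ, if and only if ⟨a, ⟨a, b, c⟩, c⟩ = ⟨a, b, c⟩ for all a, b, c ∈ Λ. -/
/-- Equation (E1) for a ternary operation `T` on `Λ`. -/
def TernE1 {Λ : Type*} (T : Λ → Λ → Λ → Λ) : Prop :=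
  ∀ a b c d, T a (T a b c) (T (T a b c) c d) = T a b (T b c d)

/-- Equation (E2) for a ternary operation `T` on `Λ`. -/
def TernE2 {Λ : Type*} (T : Λ → Λ → Λ → Λ) : Prop :=
  ∀ a b c d, T (T a b c) c d = T (T a b (T b c d)) (T b c d) d

/-- The left component `x ⇀_λ y = λ \ ⟨λ, λ◁x, (λ◁x)◁y⟩` of `σ_T`. -/
def sigmaTL {Λ X : Type*} (act : Λ → X → Λ) (dv : Λ → Λ → X)
    (T : Λ → Λ → Λ → Λ) : Λ → X → X → X :=
  fun lam x y => dv lam (T lam (act lam x) (act (act lam x) y))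

/-- The right component `x ↼_λ y = ⟨λ, λ◁x, (λ◁x)◁y⟩ \ ((λ◁x)◁y)` of `σ_T`. -/
def sigmaTR {Λ X : Type*} (act : Λ → X → Λ) (dv : Λ → Λ → X)
    (T : Λ → Λ → Λ → Λ) : Λ → X → X → X :=
  fun lam x y => dv (T lam (act lam x) (act (act lam x) y)) (act (act lam x) y)

/-- The dynamical Yang–Baxter map `σ_T` as a family of maps on `X × X`. -/
def sigmaTMap {Λ X : Type*} (act : Λ → X → Λ) (dv : Λ → Λ → X)
    (T : Λ → Λ → Λ → Λ) : Λ → X × X → X × X :=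
  fun lam p => (sigmaTL act dv T lam p.1 p.2, sigmaTR act dv T lam p.1 p.2)

/-!
A pair `(x, y)` based at `l` is a two-step path `l → l ◁ x → (l ◁ x) ◁ y`. In terms of the two
vertices `(b, c)` reached by the path, `σ_T(l)` is the map `(b, c) ↦ (⟨l, b, c⟩, c)`: it moves the
middle vertex and fixes the end. Idempotence of this map is the claimed identity, and it passes to
`σ_T(l)` because every pair of vertices is reached by the path whose steps are the left divisions.
-/

/-- The vertices `(l ◁ x, (l ◁ x) ◁ y)` reached by the path with base `l` and steps `(x, y)`; they
serve as coordinates in which `σ_T(l)` becomes `replaceMiddle T l`. The base is left out because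
`σ_T(l)` never moves it. -/
def pathVertices {Λ X : Type*} (act : Λ → X → Λ) (l : Λ) (p : X × X) : Λ × Λ :=
  (act l p.1, act (act l p.1) p.2)

/-- The steps `(l \ b, b \ c)` that lead from the base `l` through the vertices `(b, c)`; this goes
back from the coordinates `pathVertices` to pairs of elements of `X`. -/
def pathSteps {Λ X : Type*} (dv : Λ → Λ → X) (l : Λ) (q : Λ × Λ) : X × X :=
  (dv l q.1, dv q.1 q.2)

/-- The map `(b, c) ↦ (⟨l, b, c⟩, c)` replacing the middle vertex of a two-step path with base `l`,
which is `σ_T(l)` in the coordinates `pathVertices`. -/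
def replaceMiddle {Λ : Type*} (T : Λ → Λ → Λ → Λ) (l : Λ) (q : Λ × Λ) : Λ × Λ :=
  (T l q.1 q.2, q.2)

theorem idempotent_conj_iff_of_leftInverse {α β : Type*} {r : α → β} {s : β → α}
    (h : Function.LeftInverse r s) (f : β → β) :
    (∀ x, s (f (r (s (f (r x))))) = s (f (r x))) ↔ ∀ y, f (f y) = f y := by
  simp only [h _, h.injective.eq_iff, h.surjective.forall]

theorem replaceMiddle_idempotent_iff {Λ : Type*} (T : Λ → Λ → Λ → Λ) (l : Λ) :
    (∀ q, replaceMiddle T l (replaceMiddle T l q) = replaceMiddle T l q) ↔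
      ∀ b c, T l (T l b c) c = T l b c := by
  simp only [replaceMiddle, Prod.forall, Prod.mk.injEq, and_true]

section DynamicalSet

variable {Λ X : Type*} {act : Λ → X → Λ} {dv : Λ → Λ → X}

theorem leftInverse_pathVertices_pathSteps (hdv : ∀ l m, act l (dv l m) = m) (l : Λ) :
    Function.LeftInverse (pathVertices act l) (pathSteps dv l) := fun q => by
  simp only [pathVertices, pathSteps, hdv]

theorem sigmaTMap_eq_pathSteps_replaceMiddle_pathVertices (T : Λ → Λ → Λ → Λ) (l : Λ)
    (p : X × X) :
    sigmaTMap act dv T l p = pathSteps dv l (replaceMiddle T l (pathVertices act l p)) :=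
  rfl

theorem sigmaT_idempotent_iff_general (hdv : ∀ l m, act l (dv l m) = m)
    (T : Λ → Λ → Λ → Λ) (l : Λ) :
    (∀ p : X × X, sigmaTMap act dv T l (sigmaTMap act dv T l p) = sigmaTMap act dv T l p) ↔
      ∀ b c, T l (T l b c) c = T l b c := by
  simp only [sigmaTMap_eq_pathSteps_replaceMiddle_pathVertices]
  rw [idempotent_conj_iff_of_leftInverse (leftInverse_pathVertices_pathSteps hdv l),
    replaceMiddle_idempotent_iff]

end DynamicalSet

/-- For a dynamical set `(X, act)` of PH type (with left division `dv`) and a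
ternary operation `T` satisfying (E1) and (E2), the dynamical Yang–Baxter map
`σ_T` is idempotent if and only if `⟨a, ⟨a,b,c⟩, c⟩ = ⟨a,b,c⟩` for all
`a, b, c ∈ Λ`. -/
theorem sigmaT_idempotent_iff {Λ X : Type*} [Nonempty Λ] (act : Λ → X → Λ)
    (hPH : Function.Bijective fun p : Λ × X => (p.1, act p.1 p.2))
    (dv : Λ → Λ → X)
    (hdv1 : ∀ l m, act l (dv l m) = m)
    (hdv2 : ∀ l x, dv l (act l x) = x)
    (T : Λ → Λ → Λ → Λ) (hE1 : TernE1 T) (hE2 : TernE2 T) :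
    (∀ lam (p : X × X),
        sigmaTMap act dv T lam (sigmaTMap act dv T lam p)
          = sigmaTMap act dv T lam p)
      ↔ ∀ a b c : Λ, T a (T a b c) c = T a b c :=
  forall_congr' (sigmaT_idempotent_iff_general hdv1 T)
end

section
/- Let X₀ be a non-empty set, {*_i}_{i∈X₀} a family of left-quasigroup operations on Λ with left divisions \_i, and X = X₀ × Λ the dynamical set over Λ with λ ◁ (i, μ) = λ *_i μ. Let σ₀ be a Yang–Baxter map on X₀, written σ₀(i, j) = (i ▷ j, i ◁ j), let T = ⟨-,-,-⟩ be a ternary operation on Λ satisfying (E1) and (E2), and let σ be the resulting dynamical Yang–Baxter map σ(λ)((i, x), (j, y)) = ((i ▷ j, λ \_{i ▷ j} m), (i ◁ j, m \_{i ◁ j} ((λ *_i x) *_j y))) with m = ⟨λ, λ *_i x, (λ *_i x) *_j y⟩. Then: (a) σ(λ) ∘ σ(λ) = id for all λ if and only if σ₀ ∘ σ₀ = id and ⟨a, ⟨a, b, c⟩, c⟩ = b for all a, b, c ∈ Λ; (b) σ(λ) ∘ σ(λ) = σ(λ) for all λ if and only if σ₀ ∘ σ₀ = σ₀ and ⟨a,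 ⟨a, b, c⟩, c⟩ = ⟨a, b, c⟩ for all a, b, c ∈ Λ; (c) σ(λ) is bijective for all λ if and only if σ₀ is bijective and the map x ↦ ⟨a, x, c⟩ is bijective on Λ for all a, c ∈ Λ. -/
/-- `σ(λ)₁₂` on `X × X × X`, where `σ(λ)(x,y) = (l λ x y, r λ x y)`. -/
def dybS12 {Λ X : Type*} (l r : Λ → X → X → X) (lam : Λ) :
    X × X × X → X × X × X :=
  fun t => (l lam t.1 t.2.1, r lam t.1 t.2.1, t.2.2)

/-- `σ(λ ◁ X⁽¹⁾)₂₃` on `X × X × X`. -/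
def dybS23 {Λ X : Type*} (act : Λ → X → Λ) (l r : Λ → X → X → X) (lam : Λ) :
    X × X × X → X × X × X :=
  fun t => (t.1, l (act lam t.1) t.2.1 t.2.2, r (act lam t.1) t.2.1 t.2.2)

/-- `(σ₀ × id)` on `X₀ × X₀ × X₀`, where `σ₀(i,j) = (tL i j, tR i j)`. -/
def ybS12 {X0 : Type*} (tL tR : X0 → X0 → X0) :
    X0 × X0 × X0 → X0 × X0 × X0 :=
  fun t => (tL t.1 t.2.1, tR t.1 t.2.1, t.2.2)

/-- `(id × σ₀)` on `X₀ × X₀ × X₀`. -/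
def ybS23 {X0 : Type*} (tL tR : X0 → X0 → X0) :
    X0 × X0 × X0 → X0 × X0 × X0 :=
  fun t => (t.1, tL t.2.1 t.2.2, tR t.2.1 t.2.2)

/-- The Yang–Baxter map `σ₀` as a map on `X₀ × X₀`. -/
def yb0 {X0 : Type*} (tL tR : X0 → X0 → X0) : X0 × X0 → X0 × X0 :=
  fun p => (tL p.1 p.2, tR p.1 p.2)

/-- The structure map of the dynamical set `X = X₀ × Λ`:
`λ ◁ (i, μ) = λ *_i μ`. -/
def actXfam {Λ X0 : Type*} (star : X0 → Λ → Λ → Λ) : Λ → X0 × Λ → Λ :=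
  fun lam p => star p.1 lam p.2

/-- The left component of `σ`:
`(i, x) ⇀_λ (j, y) = (i ▷ j, λ \_{i ▷ j} ⟨λ, λ *_i x, (λ *_i x) *_j y⟩)`. -/
def newSigmaL {Λ X0 : Type*} (star ldiv : X0 → Λ → Λ → Λ)
    (tL : X0 → X0 → X0) (T : Λ → Λ → Λ → Λ) :
    Λ → X0 × Λ → X0 × Λ → X0 × Λ :=
  fun lam p q =>
    (tL p.1 q.1,
      ldiv (tL p.1 q.1) lam
        (T lam (star p.1 lam p.2) (star q.1 (star p.1 lam p.2) q.2)))

/-- The right component of `σ`: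
`(i, x) ↼_λ (j, y) = (i ◁ j, ⟨λ, λ *_i x, (λ *_i x) *_j y⟩ \_{i ◁ j} ((λ *_i x) *_j y))`. -/
def newSigmaR {Λ X0 : Type*} (star ldiv : X0 → Λ → Λ → Λ)
    (tR : X0 → X0 → X0) (T : Λ → Λ → Λ → Λ) :
    Λ → X0 × Λ → X0 × Λ → X0 × Λ :=
  fun lam p q =>
    (tR p.1 q.1,
      ldiv (tR p.1 q.1)
        (T lam (star p.1 lam p.2) (star q.1 (star p.1 lam p.2) q.2))
        (star q.1 (star p.1 lam p.2) q.2))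

/-- The dynamical Yang–Baxter map `σ` as a family of maps on `X × X`,
`X = X₀ × Λ`. -/
def newSigmaMap {Λ X0 : Type*} (star ldiv : X0 → Λ → Λ → Λ)
    (tL tR : X0 → X0 → X0) (T : Λ → Λ → Λ → Λ) :
    Λ → (X0 × Λ) × (X0 × Λ) → (X0 × Λ) × (X0 × Λ) :=
  fun lam p =>
    (newSigmaL star ldiv tL T lam p.1 p.2, newSigmaR star ldiv tR T lam p.1 p.2)

/-!
An element `((i, x), (j, y))` of `X × X` seen from `λ` is the path
`λ → λ *_i x → (λ *_i x) *_j y` with its two steps labelled by `i` and `j`. Left division recovers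
the element from the labels and the last two vertices `(b, c)` of the path, and in these coordinates
`σ(λ)` becomes the product of `σ₀`, acting on the labels, and `(b, c) ↦ (⟨λ, b, c⟩, c)`, acting on
the vertices. The second factor fixes `c`, so it is the family of maps `b ↦ ⟨λ, b, c⟩`. Unitarity
and idempotency are the cases `(m, n) = (2, 0)` and `(2, 1)` of the equation `f^[m] = f^[n]`, which,
like bijectivity, is invariant under conjugation and can be checked on the factors and on the
fibres.
-/

open Function

section General

variable {α β γ δ : Type*}

theorem iterate_conj (e : α ≃ β) (f : α → α) (n : ℕ) : (e.conj f)^[n] = e.conj f^[n] := by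
  induction n with
  | zero => exact e.self_comp_symm.symm
  | succ n ih => rw [iterate_succ, iterate_succ, ih, e.conj_comp]

theorem bijective_conj_iff (e : α ≃ β) (f : α → α) : Bijective (e.conj f) ↔ Bijective f :=
  (e.comp_bijective (f ∘ e.symm)).trans (e.symm.bijective_comp f)

theorem prodMap_eq_prodMap_iff [Nonempty α] [Nonempty β] {f f' : α → γ} {g g' : β → δ} :
    Prod.map f g = Prod.map f' g' ↔ f = f' ∧ g = g' := by
  simp [funext_iff, forall_and]

/-- The map `(x, y) ↦ (f x y, y)` fibred over the second coordinate: on the fibre over `y` it acts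
as `x ↦ f x y`. -/
def fiberwiseMap (f : α → β → γ) (p : α × β) : γ × β :=
  (f p.1 p.2, p.2)

theorem fiberwiseMap_injective : Injective (fiberwiseMap : (α → β → γ) → α × β → γ × β) :=
  fun _ _ h ↦ funext₂ fun x y ↦ congrArg Prod.fst (congrFun h (x, y))

theorem iterate_fiberwiseMap (f : α → β → α) (n : ℕ) :
    (fiberwiseMap f)^[n] = fiberwiseMap fun x y ↦ (f · y)^[n] x := by
  induction n with
  | zero => rfl
  | succ n ih => rw [iterate_succ, ih]; rfl

theorem bijective_fiberwiseMap_iff {f : α → β → γ} :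
    Bijective (fiberwiseMap f) ↔ ∀ y, Bijective (f · y) := by
  refine ⟨fun h y ↦ ⟨fun x x' hx ↦ ?_, fun z ↦ ?_⟩, fun h ↦ ⟨?_, ?_⟩⟩
  · exact congrArg Prod.fst (h.injective (a₁ := (x, y)) (a₂ := (x', y)) (Prod.ext hx rfl))
  · obtain ⟨⟨x, _⟩, hx⟩ := h.surjective (z, y)
    obtain ⟨hz, rfl⟩ := Prod.mk.inj hx
    exact ⟨x, hz⟩
  · rintro ⟨x, y⟩ ⟨x', _⟩ hx
    obtain ⟨hx, rfl⟩ := Prod.mk.inj hx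
    exact congrArg (·, y) ((h y).injective hx)
  · rintro ⟨z, y⟩
    obtain ⟨x, rfl⟩ := (h y).surjective z
    exact ⟨(x, y), rfl⟩

end General

section NewSigma

variable {Λ X0 : Type*} {star ldiv : X0 → Λ → Λ → Λ}
  (ldiv_star : ∀ i a x, ldiv i a (star i a x) = x)
  (star_ldiv : ∀ i a b, star i a (ldiv i a b) = b)

/-- Path coordinates on `X × X`: the pair `((i, x), (j, y))` corresponds to its labels `(i, j)` and
the vertices `(λ *_i x, (λ *_i x) *_j y)` of the path from `λ` along it. -/
def pathEquiv (lam : Λ) : (X0 × Λ) × (X0 × Λ) ≃ (X0 × X0) × (Λ × Λ) where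
  toFun p :=
    ((p.1.1, p.2.1), (star p.1.1 lam p.1.2, star p.2.1 (star p.1.1 lam p.1.2) p.2.2))
  invFun q := ((q.1.1, ldiv q.1.1 lam q.2.1), (q.1.2, ldiv q.1.2 q.2.1 q.2.2))
  left_inv p := by simp only [ldiv_star]
  right_inv q := by simp only [star_ldiv]

variable (tL tR : X0 → X0 → X0) (T : Λ → Λ → Λ → Λ)

theorem newSigmaMap_eq_conj (lam : Λ) :
    newSigmaMap star ldiv tL tR T lam =
      (pathEquiv ldiv_star star_ldiv lam).symm.conj
        (Prod.map (yb0 tL tR) (fiberwiseMap (T lam))) :=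
  rfl

variable [Nonempty Λ] [Nonempty X0] (lam : Λ)

include ldiv_star star_ldiv

theorem iterate_newSigmaMap_eq_iterate_iff (m n : ℕ) :
    (∀ p, (newSigmaMap star ldiv tL tR T lam)^[m] p =
        (newSigmaMap star ldiv tL tR T lam)^[n] p) ↔
      (∀ p, (yb0 tL tR)^[m] p = (yb0 tL tR)^[n] p) ∧
        ∀ b c, (T lam · c)^[m] b = (T lam · c)^[n] b := by
  simp only [← funext_iff, newSigmaMap_eq_conj ldiv_star star_ldiv, iterate_conj,
    EmbeddingLike.apply_eq_iff_eq, Prod.map_iterate, prodMap_eq_prodMap_iff, iterate_fiberwiseMap,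
    fiberwiseMap_injective.eq_iff]

theorem bijective_newSigmaMap_iff :
    Bijective (newSigmaMap star ldiv tL tR T lam) ↔
      Bijective (yb0 tL tR) ∧ ∀ c, Bijective (T lam · c) := by
  rw [newSigmaMap_eq_conj ldiv_star star_ldiv, bijective_conj_iff, Prod.map_bijective,
    bijective_fiberwiseMap_iff]

end NewSigma

theorem newSigma_unitary_idempotent_invertible_general {Λ X0 : Type*}
    [Nonempty Λ] [Nonempty X0]
    (star ldiv : X0 → Λ → Λ → Λ)
    (ldiv_star : ∀ i a x, ldiv i a (star i a x) = x)
    (star_ldiv : ∀ i a b, star i a (ldiv i a b) = b)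
    (tL tR : X0 → X0 → X0) (T : Λ → Λ → Λ → Λ) :
    ((∀ lam p, newSigmaMap star ldiv tL tR T lam
          (newSigmaMap star ldiv tL tR T lam p) = p)
        ↔ ((∀ p, yb0 tL tR (yb0 tL tR p) = p) ∧
            ∀ a b c : Λ, T a (T a b c) c = b)) ∧
    ((∀ lam p, newSigmaMap star ldiv tL tR T lam
          (newSigmaMap star ldiv tL tR T lam p)
            = newSigmaMap star ldiv tL tR T lam p)
        ↔ ((∀ p, yb0 tL tR (yb0 tL tR p) = yb0 tL tR p) ∧
            ∀ a b c : Λ, T a (T a b c) c = T a b c)) ∧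
    ((∀ lam, Function.Bijective (newSigmaMap star ldiv tL tR T lam))
        ↔ (Function.Bijective (yb0 tL tR) ∧
            ∀ a c : Λ, Function.Bijective fun x => T a x c)) := by
  have iterate_iff (m n : ℕ) := (forall_congr' fun lam ↦ iterate_newSigmaMap_eq_iterate_iff
    ldiv_star star_ldiv tL tR T lam m n).trans (forall_and_left _ _)
  have bijective_iff := (forall_congr' fun lam ↦
    bijective_newSigmaMap_iff ldiv_star star_ldiv tL tR T lam).trans (forall_and_left _ _)
  exact ⟨iterate_iff 2 0, iterate_iff 2 1, bijective_iff⟩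

/-- For the dynamical Yang–Baxter map `σ` on `X = X₀ × Λ` built from a
Yang–Baxter map `σ₀` on `X₀` and a ternary operation `T` satisfying (E1) and
(E2): (a) `σ` is unitary iff `σ₀` is unitary and `⟨a,⟨a,b,c⟩,c⟩ = b`;
(b) `σ` is idempotent iff `σ₀` is idempotent and `⟨a,⟨a,b,c⟩,c⟩ = ⟨a,b,c⟩`;
(c) `σ` is invertible iff `σ₀` is invertible and `x ↦ ⟨a,x,c⟩` is bijective. -/
theorem newSigma_unitary_idempotent_invertible {Λ X0 : Type*}
    [Nonempty Λ] [Nonempty X0]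
    (star ldiv : X0 → Λ → Λ → Λ)
    (hbij : ∀ i a, Function.Bijective (star i a))
    (hd1 : ∀ i a x, ldiv i a (star i a x) = x)
    (hd2 : ∀ i a b, star i a (ldiv i a b) = b)
    (tL tR : X0 → X0 → X0)
    (hYB : ybS12 tL tR ∘ ybS23 tL tR ∘ ybS12 tL tR
            = ybS23 tL tR ∘ ybS12 tL tR ∘ ybS23 tL tR)
    (T : Λ → Λ → Λ → Λ) (hE1 : TernE1 T) (hE2 : TernE2 T) :
    -- (a) unitary
    ((∀ lam p, newSigmaMap star ldiv tL tR T lam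
          (newSigmaMap star ldiv tL tR T lam p) = p)
        ↔ ((∀ p, yb0 tL tR (yb0 tL tR p) = p) ∧
            ∀ a b c : Λ, T a (T a b c) c = b)) ∧
    -- (b) idempotent
    ((∀ lam p, newSigmaMap star ldiv tL tR T lam
          (newSigmaMap star ldiv tL tR T lam p)
            = newSigmaMap star ldiv tL tR T lam p)
        ↔ ((∀ p, yb0 tL tR (yb0 tL tR p) = yb0 tL tR p) ∧
            ∀ a b c : Λ, T a (T a b c) c = T a b c)) ∧
    -- (c) invertible
    ((∀ lam, Function.Bijective (newSigmaMap star ldiv tL tR T lam))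
        ↔ (Function.Bijective (yb0 tL tR) ∧
            ∀ a c : Λ, Function.Bijective fun x => T a x c)) :=
  newSigma_unitary_idempotent_invertible_general star ldiv hd1 hd2 tL tR T
end
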